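/- arXiv:2305.12615 — 2 statements merged into one kernel-verified Lean document; each statement's English description precedes it below -/
import Mathlib

section
/- Under the hypotheses (H1)–(H3) on the pressure P, with k(ρ) = ∫₀^ρ √(P'(y))/y dy, λ₁ = (3−γ₁)/(2(γ₁−1)), M_{λ₁} = (2λ₁ (2λ₁+1)^{−1/2} ∫_{−1}^{1} (1−z²)^{λ₁} dz)^{−1}, a₁(ρ) = M_{λ₁} k(ρ)^{−λ₁} k'(ρ)^{−1/2}, and a₂(ρ) = −(4(λ₁+1))^{−1} k(ρ)^{−λ₁−1} k'(ρ)^{−1/2} ∫₀^ρ k(s)^{λ₁} k'(s)^{−1/2} a₁''(s) ds, there exist a constant C > 0 and a threshold ρ̄ ≥ ρ^* such that, with θ₁ = (γ₁−1)/2 and θ₂ = (γ₂−1)/2, for all ρ ≥ ρ̄: |a₁(ρ)| + ρ|a₁'(ρ)| + ρ²|a₁''(ρ)| ≤ C ρ^{1/2 − θ₂/(2θ₁)} and |a₂(ρ)| + ρ|a₂'(ρ)| + ρ²|a₂''(ρ)| ≤ C ρ^{1/2 − θ₂ − θ₂/(2θ₁)}; in particular |a₁(ρ)| + ρ^{θ₂}|a₂(ρ)|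 ≤ C ρ^{1/2 − θ₂/(2θ₁)}. -/
open Set MeasureTheory Filter
open Topology Asymptotics

def SymbBd : ℕ → ℝ → (ℝ → ℝ) → Prop
  | 0, m, f => f =O[atTop] (fun x : ℝ => x ^ m)
  | n + 1, m, f => f =O[atTop] (fun x : ℝ => x ^ m) ∧
      (∀ᶠ x in atTop, DifferentiableAt ℝ f x) ∧ SymbBd n (m - 1) (deriv f)

lemma SymbBd.isBigO {n : ℕ} {m : ℝ} {f : ℝ → ℝ} (h : SymbBd n m f) :
    f =O[atTop] (fun x : ℝ => x ^ m) := by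
  cases n with
  | zero => exact h
  | succ n => exact h.1

lemma SymbBd.pred {n : ℕ} {m : ℝ} {f : ℝ → ℝ} (h : SymbBd (n + 1) m f) : SymbBd n m f := by
  induction n generalizing m f with
  | zero => exact h.1
  | succ n ih => exact ⟨h.1, h.2.1, ih h.2.2⟩

lemma evEq_nhds {p : ℝ → Prop} (h : ∀ᶠ x in atTop, p x) :
    ∀ᶠ x in atTop, ∀ᶠ y in 𝓝 x, p y := by
  obtain ⟨R, hR⟩ := eventually_atTop.1 h
  filter_upwards [eventually_gt_atTop R] with x hx
  filter_upwards [lt_mem_nhds hx] with y hy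
  exact hR y hy.le

lemma evEq_deriv {f g : ℝ → ℝ} (h : f =ᶠ[atTop] g) : deriv f =ᶠ[atTop] deriv g := by
  filter_upwards [evEq_nhds h] with x hx
  exact Filter.EventuallyEq.deriv_eq hx

lemma SymbBd.congr {n : ℕ} {m : ℝ} {f g : ℝ → ℝ} (h : SymbBd n m f) (e : f =ᶠ[atTop] g) :
    SymbBd n m g := by
  induction n generalizing m f g with
  | zero => exact IsBigO.congr' h e (EventuallyEq.refl _ _)
  | succ n ih =>
    refine ⟨IsBigO.congr' h.1 e (EventuallyEq.refl _ _), ?_, ih h.2.2 (evEq_deriv e)⟩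
    filter_upwards [h.2.1, evEq_nhds e] with x hx hx2
    exact hx.congr_of_eventuallyEq (EventuallyEq.symm hx2)

lemma SymbBd.mono {n : ℕ} {m m' : ℝ} {f : ℝ → ℝ} (h : SymbBd n m f) (hm : m ≤ m') :
    SymbBd n m' f := by
  have key : ∀ a b : ℝ, a ≤ b → (fun x : ℝ => x ^ a) =O[atTop] (fun x : ℝ => x ^ b) := by
    intro a b hab
    refine IsBigO.of_bound 1 ?_
    filter_upwards [eventually_ge_atTop (1:ℝ)] with x hx
    have : (0:ℝ) ≤ x := by linarith
    rw [Real.norm_of_nonneg (by positivity), Real.norm_of_nonneg (by positivity), one_mul]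
    exact Real.rpow_le_rpow_of_exponent_le hx hab
  induction n generalizing m m' f with
  | zero => exact IsBigO.trans h (key _ _ hm)
  | succ n ih => exact ⟨h.1.trans (key _ _ hm), h.2.1, ih h.2.2 (by linarith)⟩

lemma SymbBd.add {n : ℕ} {m : ℝ} {f g : ℝ → ℝ} (hf : SymbBd n m f) (hg : SymbBd n m g) :
    SymbBd n m (fun x => f x + g x) := by
  induction n generalizing m f g with
  | zero => exact IsBigO.add hf hg
  | succ n ih =>
    refine ⟨IsBigO.add hf.1 hg.1, ?_, (ih hf.2.2 hg.2.2).congr ?_⟩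
    · filter_upwards [hf.2.1, hg.2.1] with x h1 h2 using h1.add h2
    · filter_upwards [hf.2.1, hg.2.1] with x h1 h2 using (deriv_fun_add h1 h2).symm

lemma SymbBd.mul {n : ℕ} {m m' : ℝ} {f g : ℝ → ℝ} (hf : SymbBd n m f) (hg : SymbBd n m' g) :
    SymbBd n (m + m') (fun x => f x * g x) := by
  have key : ∀ (m m' : ℝ) (f g : ℝ → ℝ), f =O[atTop] (fun x : ℝ => x ^ m) →
      g =O[atTop] (fun x : ℝ => x ^ m') →
      (fun x => f x * g x) =O[atTop] (fun x : ℝ => x ^ (m + m')) := by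
    intro m m' f g h1 h2
    refine (h1.mul h2).congr' (EventuallyEq.refl _ _) ?_
    filter_upwards [eventually_gt_atTop (0:ℝ)] with x hx
    exact (Real.rpow_add hx _ _).symm
  induction n generalizing m m' f g with
  | zero => exact key _ _ _ _ hf hg
  | succ n ih =>
    refine ⟨key _ _ _ _ hf.1 hg.1, ?_, ?_⟩
    · filter_upwards [hf.2.1, hg.2.1] with x h1 h2 using h1.mul h2
    · have h1 := ih hf.2.2 hg.pred
      have h2 := ih hf.pred hg.2.2
      rw [show m - 1 + m' = m + m' - 1 by ring] at h1
      rw [show m + (m' - 1) = m + m' - 1 by ring] at h2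
      refine (h1.add h2).congr ?_
      filter_upwards [hf.2.1, hg.2.1] with x h1 h2 using (deriv_fun_mul h1 h2).symm

lemma SymbBd.zero (n : ℕ) (m : ℝ) : SymbBd n m (fun _ => 0) := by
  induction n generalizing m with
  | zero => exact isBigO_zero _ _
  | succ n ih =>
    refine ⟨isBigO_zero _ _, Eventually.of_forall fun x => differentiableAt_const _, ?_⟩
    simpa using ih (m - 1)

lemma SymbBd.const (n : ℕ) (c : ℝ) : SymbBd n 0 (fun _ => c) := by
  have key : (fun _ : ℝ => c) =O[atTop] (fun x : ℝ => x ^ (0:ℝ)) := by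
    simpa using isBigO_const_const c (one_ne_zero : (1:ℝ) ≠ 0) atTop
  cases n with
  | zero => exact key
  | succ n =>
    refine ⟨key, Eventually.of_forall fun x => differentiableAt_const _, ?_⟩
    simpa using SymbBd.zero n (0 - 1)

lemma SymbBd.const_mul {n : ℕ} {m : ℝ} {f : ℝ → ℝ} (h : SymbBd n m f) (c : ℝ) :
    SymbBd n m (fun x => c * f x) := by
  simpa using (SymbBd.const n c).mul h

lemma SymbBd.pow (n : ℕ) (m : ℝ) : SymbBd n m (fun x => x ^ m) := by
  induction n generalizing m with
  | zero => exact isBigO_refl _ _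
  | succ n ih =>
    refine ⟨isBigO_refl _ _, ?_, ((ih (m - 1)).const_mul m).congr ?_⟩
    · filter_upwards [eventually_gt_atTop (0:ℝ)] with x hx
      exact (Real.hasDerivAt_rpow_const (Or.inl hx.ne')).differentiableAt
    · filter_upwards [eventually_gt_atTop (0:ℝ)] with x hx
      exact (Real.hasDerivAt_rpow_const (Or.inl hx.ne')).deriv.symm

/-- eventual lower bound of order m -/
def LowBd (m : ℝ) (f : ℝ → ℝ) : Prop := ∃ c : ℝ, 0 < c ∧ ∀ᶠ x in atTop, c * x ^ m ≤ f x

lemma LowBd.pos {m : ℝ} {f : ℝ → ℝ} (h : LowBd m f) : ∀ᶠ x in atTop, 0 < f x := by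
  obtain ⟨c, hc, h⟩ := h
  filter_upwards [h, eventually_gt_atTop (0:ℝ)] with x hx h0
  exact lt_of_lt_of_le (by positivity) hx

lemma SymbBd.rpow {n : ℕ} {m : ℝ} {f : ℝ → ℝ} (hf : SymbBd n m f) (hl : LowBd m f) (p : ℝ) :
    SymbBd n (p * m) (fun x => f x ^ p) := by
  have key : ∀ p : ℝ, (fun x => f x ^ p) =O[atTop] (fun x : ℝ => x ^ (p * m)) := by
    intro p
    obtain ⟨c, hc, hl'⟩ := hl
    obtain ⟨C, hC⟩ := hf.isBigO.bound
    by_cases hp : 0 ≤ p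
    · refine IsBigO.of_bound (C ^ p) ?_
      filter_upwards [hl', hC, eventually_gt_atTop (0:ℝ)] with x h1 h2 h0
      have hfx : 0 < f x := lt_of_lt_of_le (by positivity) h1
      have hx : 0 < x ^ m := by positivity
      rw [Real.norm_of_nonneg hfx.le, Real.norm_of_nonneg hx.le] at h2
      have hCp : 0 < C := by
        by_contra hcon
        nlinarith
      rw [Real.norm_of_nonneg (by positivity), Real.norm_of_nonneg (by positivity), mul_comm p m,
        Real.rpow_mul h0.le, ← Real.mul_rpow hCp.le hx.le]
      exact Real.rpow_le_rpow hfx.le h2 hp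
    · refine IsBigO.of_bound (c ^ p) ?_
      filter_upwards [hl', eventually_gt_atTop (0:ℝ)] with x h1 h0
      have hx : 0 < x ^ m := by positivity
      have hfx : 0 < f x := lt_of_lt_of_le (by positivity) h1
      rw [Real.norm_of_nonneg (by positivity), Real.norm_of_nonneg (by positivity), mul_comm p m,
        Real.rpow_mul h0.le, ← Real.mul_rpow hc.le hx.le]
      exact Real.rpow_le_rpow_of_nonpos (by positivity) h1 (by linarith)
  induction n generalizing p with
  | zero => exact key p
  | succ n ih =>
    refine ⟨key p, ?_, ?_⟩
    · filter_upwards [hf.2.1, hl.pos] with x h1 h2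
      exact h1.rpow_const (Or.inl h2.ne')
    · have h := ((ih hf.pred (p - 1)).mul hf.2.2).const_mul p
      rw [show (p - 1) * m + (m - 1) = p * m - 1 by ring] at h
      refine h.congr ?_
      filter_upwards [hf.2.1, hl.pos] with x h1 h2
      rw [deriv_rpow_const h1 (Or.inl h2.ne')]
      ring

lemma LowBd.of_add {m m' b : ℝ} {f : ℝ → ℝ} (hb : 0 < b) (hm : m' < m)
    (hf : f =O[atTop] (fun x : ℝ => x ^ m')) : LowBd m (fun x => b * x ^ m + f x) := by
  refine ⟨b / 2, by positivity, ?_⟩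
  have ho : f =o[atTop] (fun x : ℝ => x ^ m) := by
    refine hf.trans_isLittleO ?_
    refine isLittleO_of_tendsto' ?_ ?_
    · filter_upwards [eventually_gt_atTop (0:ℝ)] with x hx h0
      exact absurd h0 (by positivity)
    · refine (tendsto_rpow_neg_atTop (sub_pos.2 hm)).congr' ?_
      filter_upwards [eventually_gt_atTop (0:ℝ)] with x hx
      rw [← Real.rpow_sub hx]
      congr 1
      ring
  filter_upwards [ho.bound (half_pos hb), eventually_gt_atTop (0:ℝ)] with x hx h0
  rw [Real.norm_eq_abs, Real.norm_of_nonneg (by positivity)] at hx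
  have := neg_abs_le (f x)
  linarith

/-- comparison of primitives -/
lemma ev_le_of_deriv_le {f g f' g' : ℝ → ℝ} (hf : ∀ᶠ x in atTop, HasDerivAt f (f' x) x)
    (hg : ∀ᶠ x in atTop, HasDerivAt g (g' x) x) (h : ∀ᶠ x in atTop, f' x ≤ g' x) :
    ∃ K : ℝ, ∀ᶠ x in atTop, f x ≤ g x + K := by
  obtain ⟨R, hR⟩ := eventually_atTop.1 (hf.and (hg.and h))
  have hd : ∀ x ∈ Ici R, HasDerivAt (fun y => g y - f y) (g' x - f' x) x :=
    fun x hx => (hR x hx).2.1.sub (hR x hx).1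
  have hmono : MonotoneOn (fun y => g y - f y) (Ici R) := by
    refine monotoneOn_of_deriv_nonneg (convex_Ici R)
      (fun x hx => (hd x hx).continuousAt.continuousWithinAt)
      (fun x hx => (hd x (interior_subset hx)).differentiableAt.differentiableWithinAt) ?_
    intro x hx
    rw [(hd x (interior_subset hx)).deriv]
    linarith [(hR x (interior_subset hx)).2.2]
  refine ⟨f R - g R, ?_⟩
  filter_upwards [eventually_ge_atTop R] with x hx
  have := hmono self_mem_Ici hx hx
  simp only at this
  linarith

lemma hasDerivAt_pow_div (m c : ℝ) (hm : m ≠ 0) :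
    ∀ᶠ x in atTop, HasDerivAt (fun x : ℝ => c / m * x ^ m) (c * x ^ (m - 1)) x := by
  filter_upwards [eventually_gt_atTop (0:ℝ)] with x hx
  have := (Real.hasDerivAt_rpow_const (x := x) (p := m) (Or.inl hx.ne')).const_mul (c / m)
  have e : c / m * (m * x ^ (m - 1)) = c * x ^ (m - 1) := by
    rw [← mul_assoc, div_mul_cancel₀ _ hm]
  rwa [e] at this

lemma primitive_abs_bound {f f' : ℝ → ℝ} {m : ℝ} (hm : m ≠ 0)
    (hf : ∀ᶠ x in atTop, HasDerivAt f (f' x) x) (h : f' =O[atTop] (fun x : ℝ => x ^ (m - 1))) :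
    ∃ A K : ℝ, ∀ᶠ x in atTop, |f x| ≤ A * x ^ m + K := by
  obtain ⟨C, hC⟩ := h.bound
  have hC' : ∀ᶠ x in atTop, |f' x| ≤ C * x ^ (m - 1) := by
    filter_upwards [hC, eventually_gt_atTop (0:ℝ)] with x hx h0
    rwa [Real.norm_eq_abs, Real.norm_of_nonneg (by positivity)] at hx
  obtain ⟨K1, h1⟩ := ev_le_of_deriv_le hf (hasDerivAt_pow_div m C hm)
    (hC'.mono fun x hx => (le_abs_self _).trans hx)
  obtain ⟨K2, h2⟩ := ev_le_of_deriv_le (f := fun x => - f x) (f' := fun x => - f' x)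
    (hf.mono fun x hx => hx.neg) (hasDerivAt_pow_div m C hm)
    (hC'.mono fun x hx => (neg_le_abs _).trans hx)
  refine ⟨C / m, max K1 K2, ?_⟩
  filter_upwards [h1, h2] with x h1 h2
  rw [abs_le]
  constructor
  · linarith [le_max_right K1 K2]
  · linarith [le_max_left K1 K2]

lemma SymbBd.of_hasDerivAt {n : ℕ} {m : ℝ} {f f' : ℝ → ℝ}
    (hf : ∀ᶠ x in atTop, HasDerivAt f (f' x) x) (h : SymbBd n (m - 1) f')
    (hO : f =O[atTop] (fun x : ℝ => x ^ m)) : SymbBd (n + 1) m f :=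
  ⟨hO, hf.mono fun _ hx => hx.differentiableAt, h.congr (hf.mono fun _ hx => hx.deriv.symm)⟩

lemma SymbBd.primitive_pos {n : ℕ} {m : ℝ} (hm : 0 < m) {f f' : ℝ → ℝ}
    (hf : ∀ᶠ x in atTop, HasDerivAt f (f' x) x) (h : SymbBd n (m - 1) f') :
    SymbBd (n + 1) m f := by
  refine SymbBd.of_hasDerivAt hf h ?_
  obtain ⟨A, K, hAK⟩ := primitive_abs_bound hm.ne' hf h.isBigO
  refine IsBigO.of_bound (A + |K|) ?_
  filter_upwards [hAK, eventually_ge_atTop (1:ℝ)] with x hx h1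
  have h2 : 1 ≤ x ^ m := Real.one_le_rpow h1 hm.le
  rw [Real.norm_eq_abs, Real.norm_of_nonneg (by linarith)]
  nlinarith [le_abs_self K, abs_nonneg K]

lemma SymbBd.primitive_neg {n : ℕ} {m : ℝ} (hm : 0 < m) {f f' : ℝ → ℝ}
    (hf : ∀ᶠ x in atTop, HasDerivAt f (f' x) x) (h : SymbBd n (-m - 1) f') :
    SymbBd (n + 1) 0 f := by
  refine SymbBd.of_hasDerivAt hf (h.mono (by linarith)) ?_
  obtain ⟨A, K, hAK⟩ := primitive_abs_bound (neg_ne_zero.2 hm.ne') hf h.isBigO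
  refine IsBigO.of_bound (|A| + |K|) ?_
  filter_upwards [hAK, eventually_ge_atTop (1:ℝ)] with x hx h1
  have h2 : x ^ (-m) ≤ 1 := Real.rpow_le_one_of_one_le_of_nonpos h1 (by linarith)
  have h3 : 0 ≤ x ^ (-m) := Real.rpow_nonneg (by linarith) _
  rw [Real.norm_eq_abs, Real.rpow_zero, norm_one]
  have : A * x ^ (-m) ≤ |A| * 1 :=
    mul_le_mul (le_abs_self A) h2 h3 (abs_nonneg A)
  linarith [le_abs_self K]

lemma LowBd.primitive {m : ℝ} (hm : 0 < m) {f f' : ℝ → ℝ}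
    (hf : ∀ᶠ x in atTop, HasDerivAt f (f' x) x) (h : LowBd (m - 1) f') : LowBd m f := by
  obtain ⟨c, hc, h⟩ := h
  obtain ⟨K, hK⟩ := ev_le_of_deriv_le (hasDerivAt_pow_div m c hm.ne') hf h
  refine ⟨c / m / 2, by positivity, ?_⟩
  have ht : Tendsto (fun x : ℝ => c / m / 2 * x ^ m) atTop atTop :=
    (tendsto_rpow_atTop hm).const_mul_atTop (by positivity)
  filter_upwards [hK, ht.eventually_ge_atTop K] with x h1 h2
  linarith

lemma SymbBd.final {m : ℝ} {f : ℝ → ℝ} (h : SymbBd 2 m f) :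
    ∃ C : ℝ, 0 < C ∧ ∀ᶠ x in atTop,
      |f x| + x * |deriv f x| + x ^ 2 * |deriv (deriv f) x| ≤ C * x ^ m := by
  obtain ⟨C0, hp0, h0⟩ := h.1.exists_pos
  obtain ⟨C1, hp1, h1⟩ := h.2.2.1.exists_pos
  obtain ⟨C2, hp2, h2⟩ := h.2.2.2.2.isBigO.exists_pos
  refine ⟨C0 + C1 + C2, by positivity, ?_⟩
  filter_upwards [h0.bound, h1.bound, h2.bound, eventually_gt_atTop (0:ℝ)] with x h0 h1 h2 hx
  rw [Real.norm_eq_abs, Real.norm_of_nonneg (by positivity)] at h0 h1 h2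
  have e1 : x * x ^ (m - 1) = x ^ m := by
    rw [Real.rpow_sub_one hx.ne']; field_simp
  have e2 : x ^ 2 * x ^ (m - 1 - 1) = x ^ m := by
    rw [Real.rpow_sub_one hx.ne', Real.rpow_sub_one hx.ne']; field_simp
  have i1 : x * |deriv f x| ≤ C1 * x ^ m := by
    calc _ ≤ x * (C1 * x ^ (m - 1)) := by gcongr
      _ = _ := by rw [← e1]; ring
  have i2 : x ^ 2 * |deriv (deriv f) x| ≤ C2 * x ^ m := by
    calc _ ≤ x ^ 2 * (C2 * x ^ (m - 1 - 1)) := by gcongr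
      _ = _ := by rw [← e2]; ring
  linarith

/-- either the fundamental theorem of calculus applies, or the integral is identically zero -/
lemma integral_dichotomy {h F : ℝ → ℝ} (hF : ∀ x, F x = ∫ y in (0:ℝ)..x, h y)
    (hc : ∀ᶠ x in atTop, ContinuousAt h x) :
    (∀ᶠ x in atTop, HasDerivAt F (h x) x) ∨ (∀ᶠ x in atTop, F x = 0) := by
  obtain ⟨R0, hR0⟩ := eventually_atTop.1 hc
  set R := max R0 1
  have hR : ∀ x, R ≤ x → ContinuousAt h x := fun x hx => hR0 x ((le_max_left _ _).trans hx)
  have hRp : 0 < R := lt_of_lt_of_le one_pos (le_max_right _ _)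
  by_cases hi : IntervalIntegrable h volume 0 R
  · left
    filter_upwards [eventually_gt_atTop R] with x hx
    have hix : IntervalIntegrable h volume R x := by
      apply ContinuousOn.intervalIntegrable
      intro y hy
      rw [uIcc_of_le hx.le] at hy
      exact (hR y hy.1).continuousWithinAt
    have hF' : F = fun x => ∫ y in (0:ℝ)..x, h y := funext hF
    rw [hF']
    refine intervalIntegral.integral_hasDerivAt_right (hi.trans hix) ?_ (hR x hx.le)
    exact ContinuousOn.stronglyMeasurableAtFilter isOpen_Ioi (s := Ioi R)
      (fun y hy => (hR y (le_of_lt hy)).continuousWithinAt) x hx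
  · right
    filter_upwards [eventually_ge_atTop R] with x hx
    rw [hF, intervalIntegral.integral_undef]
    intro hcon
    apply hi
    refine hcon.mono_set ?_
    rw [uIcc_of_le hRp.le, uIcc_of_le (hRp.le.trans hx)]
    exact Icc_subset_Icc_right hx

lemma SymbBd.of_iteratedDeriv {Q : ℝ → ℝ} {C e R : ℝ} (hQ : ContDiffOn ℝ 4 Q (Ioi 0))
    (hb : ∀ ρ : ℝ, R ≤ ρ → ∀ j : ℕ, j ≤ 4 → |iteratedDeriv j Q ρ| ≤ C * ρ ^ (-e - (j : ℝ)))
    (n j : ℕ) (hnj : n + j ≤ 4) : SymbBd n (-e - (j : ℝ)) (iteratedDeriv j Q) := by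
  have key : ∀ j : ℕ, j ≤ 4 → (iteratedDeriv j Q) =O[atTop] (fun x : ℝ => x ^ (-e - (j : ℝ))) := by
    intro j hj
    refine IsBigO.of_bound C ?_
    filter_upwards [eventually_ge_atTop R, eventually_gt_atTop (0:ℝ)] with x hx h0
    rw [Real.norm_eq_abs, Real.norm_of_nonneg (by positivity)]
    exact hb x hx j hj
  induction n generalizing j with
  | zero => exact key j (by omega)
  | succ n ih =>
    refine ⟨key j (by omega), ?_, ?_⟩
    · filter_upwards [eventually_gt_atTop (0:ℝ)] with x hx
      have hx' : ContDiffAt ℝ 4 Q x := hQ.contDiffAt (Ioi_mem_nhds hx)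
      have h1 : DifferentiableAt ℝ (iteratedFDeriv ℝ j Q) x := by
        refine hx'.differentiableAt_iteratedFDeriv ?_
        have : j < 4 := by omega
        exact_mod_cast this
      have e : iteratedDeriv j Q = fun x => iteratedFDeriv ℝ j Q x (fun _ => 1) := by
        funext y; rfl
      rw [e]
      exact h1.continuousMultilinear_apply_const _
    · have := ih (j + 1) (by omega)
      rw [iteratedDeriv_succ] at this
      convert this using 1
      push_cast; ring

theorem entropy_kernel_coefficients_large_density
    (P Q₁ Q₂ : ℝ → ℝ) (ρstar ρss γ₁ γ₂ κ₁ κ₂ Cs Css εe : ℝ)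
    (hPC1 : ContDiffOn ℝ 1 P (Ici 0))
    (hPC4 : ContDiffOn ℝ 4 P (Ioi 0))
    (hH1 : ∀ ρ : ℝ, 0 < ρ → 0 < deriv P ρ ∧ 0 < 2 * deriv P ρ + ρ * deriv (deriv P) ρ)
    (hρstar : 0 < ρstar) (hγ₁ : 1 < γ₁) (hγ₁3 : γ₁ < 3) (hκ₁ : 0 < κ₁) (hCs : 0 < Cs)
    (hQ₁C4 : ContDiffOn ℝ 4 Q₁ (Ioi 0))
    (hPsmall : ∀ ρ ∈ Ico (0:ℝ) ρstar, P ρ = κ₁ * ρ ^ γ₁ * (1 + Q₁ ρ))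
    (hQ₁bd : ∀ ρ ∈ Ioo (0:ℝ) ρstar, ∀ j : ℕ, j ≤ 4 →
      |iteratedDeriv j Q₁ ρ| ≤ Cs * ρ ^ (γ₁ - 1 - (j : ℝ)))
    (hρss : ρstar < ρss) (hγ₂ : 6/5 < γ₂) (hγ₂1 : γ₂ ≤ γ₁) (hκ₂ : 0 < κ₂)
    (hεe : 0 < εe) (hCss : 0 < Css)
    (hQ₂C4 : ContDiffOn ℝ 4 Q₂ (Ioi 0))
    (hPlarge : ∀ ρ : ℝ, ρss ≤ ρ → P ρ = κ₂ * ρ ^ γ₂ * (1 + Q₂ ρ))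
    (hQ₂bd : ∀ ρ : ℝ, ρss ≤ ρ → ∀ j : ℕ, j ≤ 4 →
      |iteratedDeriv j Q₂ ρ| ≤ Css * ρ ^ (-εe - (j : ℝ)))
    (lam₁ Mlam θ₁ θ₂ : ℝ)
    (hlam₁ : lam₁ = (3 - γ₁) / (2 * (γ₁ - 1)))
    (hMlam : Mlam = (2 * lam₁ / Real.sqrt (2 * lam₁ + 1) * ∫ z in (-1:ℝ)..1, (1 - z ^ 2) ^ lam₁)⁻¹)
    (hθ₁ : θ₁ = (γ₁ - 1) / 2) (hθ₂ : θ₂ = (γ₂ - 1) / 2)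
    (k a₁ a₂ : ℝ → ℝ)
    (hk : ∀ ρ : ℝ, k ρ = ∫ y in (0:ℝ)..ρ, Real.sqrt (deriv P y) / y)
    (ha₁ : ∀ ρ : ℝ, a₁ ρ = Mlam * k ρ ^ (-lam₁) * deriv k ρ ^ (-(1:ℝ)/2))
    (ha₂ : ∀ ρ : ℝ, a₂ ρ = -(4 * (lam₁ + 1))⁻¹ * k ρ ^ (-lam₁ - 1) * deriv k ρ ^ (-(1:ℝ)/2) *
      ∫ s in (0:ℝ)..ρ, k s ^ lam₁ * deriv k s ^ (-(1:ℝ)/2) * deriv (deriv a₁) s) :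
    ∃ C : ℝ, 0 < C ∧ ∃ ρbar : ℝ, ρss ≤ ρbar ∧ ∀ ρ : ℝ, ρbar ≤ ρ →
      (|a₁ ρ| + ρ * |deriv a₁ ρ| + ρ ^ 2 * |deriv (deriv a₁) ρ|
        ≤ C * ρ ^ ((1:ℝ)/2 - θ₂ / (2 * θ₁))) ∧
      (|a₂ ρ| + ρ * |deriv a₂ ρ| + ρ ^ 2 * |deriv (deriv a₂) ρ|
        ≤ C * ρ ^ ((1:ℝ)/2 - θ₂ - θ₂ / (2 * θ₁))) ∧
      (|a₁ ρ| + ρ ^ θ₂ * |a₂ ρ| ≤ C * ρ ^ ((1:ℝ)/2 - θ₂ / (2 * θ₁))) := by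
  have hθ₂p : 0 < θ₂ := by rw [hθ₂]; linarith
  have hlamp : 0 < lam₁ := by
    rw [hlam₁]; exact div_pos (by linarith) (by linarith)
  have hexp : θ₂ / (2 * θ₁) = θ₂ * (lam₁ + 1 / 2) := by
    rw [hθ₁, hlam₁]
    have : γ₁ - 1 ≠ 0 := by linarith
    field_simp
    ring
  -- reduction to symbol bounds
  suffices hmain : SymbBd 2 ((1:ℝ)/2 - θ₂ / (2 * θ₁)) a₁ ∧
      SymbBd 2 ((1:ℝ)/2 - θ₂ - θ₂ / (2 * θ₁)) a₂ by
    obtain ⟨C1, hC1, h1⟩ := hmain.1.final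
    obtain ⟨C2, hC2, h2⟩ := hmain.2.final
    obtain ⟨R, hR⟩ := eventually_atTop.1 (h1.and (h2.and (eventually_gt_atTop (0:ℝ))))
    refine ⟨C1 + C2, by positivity, max R ρss, le_max_right _ _, ?_⟩
    intro ρ hρ
    obtain ⟨h1, h2, h0⟩ := hR ρ ((le_max_left _ _).trans hρ)
    have p1 : 0 < ρ ^ ((1:ℝ)/2 - θ₂ / (2 * θ₁)) := by positivity
    have p2 : 0 < ρ ^ ((1:ℝ)/2 - θ₂ - θ₂ / (2 * θ₁)) := by positivity
    have q1 : 0 ≤ ρ * |deriv a₁ ρ| := by positivity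
    have q2 : 0 ≤ ρ ^ 2 * |deriv (deriv a₁) ρ| := by positivity
    have q3 : 0 ≤ ρ * |deriv a₂ ρ| := by positivity
    have q4 : 0 ≤ ρ ^ 2 * |deriv (deriv a₂) ρ| := by positivity
    refine ⟨by nlinarith, by nlinarith, ?_⟩
    have e : ρ ^ θ₂ * ρ ^ ((1:ℝ)/2 - θ₂ - θ₂ / (2 * θ₁)) = ρ ^ ((1:ℝ)/2 - θ₂ / (2 * θ₁)) := by
      rw [← Real.rpow_add h0]; congr 1; ring
    have i2 : ρ ^ θ₂ * |a₂ ρ| ≤ C2 * ρ ^ ((1:ℝ)/2 - θ₂ / (2 * θ₁)) := by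
      calc ρ ^ θ₂ * |a₂ ρ| ≤ ρ ^ θ₂ * (C2 * ρ ^ ((1:ℝ)/2 - θ₂ - θ₂ / (2 * θ₁))) := by
            gcongr; linarith
        _ = C2 * (ρ ^ θ₂ * ρ ^ ((1:ℝ)/2 - θ₂ - θ₂ / (2 * θ₁))) := by ring
        _ = _ := by rw [e]
    linarith
  -- symbol bounds for the pressure
  have hQ : SymbBd 4 (-εe) Q₂ := by
    have := SymbBd.of_iteratedDeriv hQ₂C4 hQ₂bd 4 0 (by norm_num)
    simpa using this
  have hB : SymbBd 4 (γ₂ + -εe) (fun x => κ₂ * (x ^ γ₂ * Q₂ x)) :=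
    ((SymbBd.pow 4 γ₂).mul hQ).const_mul κ₂
  have hP' : deriv P =ᶠ[atTop] fun x => κ₂ * γ₂ * x ^ (γ₂ - 1) +
      deriv (fun x => κ₂ * (x ^ γ₂ * Q₂ x)) x := by
    have e : P =ᶠ[atTop] fun x => κ₂ * x ^ γ₂ + κ₂ * (x ^ γ₂ * Q₂ x) := by
      filter_upwards [eventually_ge_atTop ρss] with x hx
      rw [hPlarge x hx]; ring
    filter_upwards [evEq_deriv e, hB.2.1, eventually_gt_atTop (0:ℝ)] with x hx hd h0
    have hd1 := (Real.hasDerivAt_rpow_const (x := x) (p := γ₂) (Or.inl h0.ne')).const_mul κ₂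
    rw [hx, deriv_fun_add hd1.differentiableAt hd, hd1.deriv]
    ring
  have hPS : SymbBd 3 (γ₂ - 1) (deriv P) := by
    have h1 := (SymbBd.pow 3 (γ₂ - 1)).const_mul (κ₂ * γ₂)
    have h2 : SymbBd 3 (γ₂ - 1) (deriv (fun x => κ₂ * (x ^ γ₂ * Q₂ x))) :=
      hB.2.2.mono (by linarith)
    exact (h1.add h2).congr hP'.symm
  have hPL : LowBd (γ₂ - 1) (deriv P) := by
    obtain ⟨c, hc, h⟩ := LowBd.of_add (m := γ₂ - 1) (b := κ₂ * γ₂)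
      (mul_pos hκ₂ (by linarith)) (by linarith) hB.2.2.isBigO
    refine ⟨c, hc, ?_⟩
    filter_upwards [h, hP'] with x h1 h2
    rw [h2]; exact h1
  -- the derivative of k
  have hhe : (fun y => deriv P y ^ ((1:ℝ)/2) * y ^ (-1:ℝ)) =ᶠ[atTop]
      fun y => Real.sqrt (deriv P y) / y := by
    filter_upwards [eventually_gt_atTop (0:ℝ)] with x hx
    rw [Real.rpow_neg_one, Real.sqrt_eq_rpow]; rfl
  have hhS : SymbBd 3 (θ₂ - 1) (fun y => Real.sqrt (deriv P y) / y) := by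
    have h := ((hPS.rpow hPL (1/2)).mul (SymbBd.pow 3 (-1))).congr hhe
    rwa [show (1:ℝ) / 2 * (γ₂ - 1) + -1 = θ₂ - 1 by rw [hθ₂]; ring] at h
  have hhL : LowBd (θ₂ - 1) (fun y => Real.sqrt (deriv P y) / y) := by
    obtain ⟨c, hc, h⟩ := hPL
    refine ⟨Real.sqrt c, Real.sqrt_pos.2 hc, ?_⟩
    filter_upwards [h, eventually_gt_atTop (0:ℝ)] with x h1 h0
    have e : Real.sqrt c * x ^ (θ₂ - 1) = Real.sqrt (c * x ^ (γ₂ - 1)) / x := by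
      rw [Real.sqrt_mul hc.le, Real.rpow_sub_one h0.ne', Real.sqrt_eq_rpow (x ^ (γ₂ - 1)),
        ← Real.rpow_mul h0.le, show (γ₂ - 1) * (1 / 2) = θ₂ by rw [hθ₂]; ring]
      ring
    rw [e]
    exact div_le_div_of_nonneg_right (Real.sqrt_le_sqrt h1) h0.le
  rcases integral_dichotomy hk (hhS.2.1.mono fun x hx => hx.continuousAt) with hkd | hk0
  swap
  · have e1 : (fun _ => (0:ℝ)) =ᶠ[atTop] a₁ := by
      filter_upwards [hk0] with x hx
      rw [ha₁, hx, Real.zero_rpow (by linarith)]; ring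
    have e2 : (fun _ => (0:ℝ)) =ᶠ[atTop] a₂ := by
      filter_upwards [hk0] with x hx
      rw [ha₂, hx, Real.zero_rpow (by linarith)]; ring
    exact ⟨(SymbBd.zero 2 _).congr e1, (SymbBd.zero 2 _).congr e2⟩
  have hkS : SymbBd 4 θ₂ k := SymbBd.primitive_pos hθ₂p hkd hhS
  have hkL : LowBd θ₂ k := LowBd.primitive hθ₂p hkd hhL
  have hk'S : SymbBd 3 (θ₂ - 1) (deriv k) := hkS.2.2
  have hk'L : LowBd (θ₂ - 1) (deriv k) := by
    obtain ⟨c, hc, h⟩ := hhL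
    refine ⟨c, hc, ?_⟩
    filter_upwards [h, hkd] with x h1 h2
    rw [h2.deriv]; exact h1
  have hw : SymbBd 3 (-(1:ℝ)/2 * (θ₂ - 1)) (fun x => deriv k x ^ (-(1:ℝ)/2)) := hk'S.rpow hk'L _
  have ha₁S : SymbBd 3 ((1:ℝ)/2 - θ₂ / (2 * θ₁)) a₁ := by
    have h := ((hkS.pred.rpow hkL (-lam₁)).const_mul Mlam).mul hw
    rw [show -lam₁ * θ₂ + -(1:ℝ)/2 * (θ₂ - 1) = (1:ℝ)/2 - θ₂ / (2 * θ₁) by rw [hexp]; ring] at h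
    exact h.congr (Eventually.of_forall fun x => (ha₁ x).symm)
  refine ⟨ha₁S.pred, ?_⟩
  -- the integrand in a₂
  have hgS : SymbBd 1 (-θ₂ - 1)
      (fun s => k s ^ lam₁ * deriv k s ^ (-(1:ℝ)/2) * deriv (deriv a₁) s) := by
    have h := ((hkS.pred.pred.pred.rpow hkL lam₁).mul hw.pred.pred).mul ha₁S.2.2.2.2
    rwa [show lam₁ * θ₂ + -(1:ℝ)/2 * (θ₂ - 1) + ((1:ℝ)/2 - θ₂ / (2 * θ₁) - 1 - 1) = -θ₂ - 1 by
      rw [hexp]; ring] at h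
  have hf : SymbBd 2 ((1:ℝ)/2 - θ₂ - θ₂ / (2 * θ₁))
      (fun x => -(4 * (lam₁ + 1))⁻¹ * k x ^ (-lam₁ - 1) * deriv k x ^ (-(1:ℝ)/2)) := by
    have h := ((hkS.pred.pred.rpow hkL (-lam₁ - 1)).const_mul (-(4 * (lam₁ + 1))⁻¹)).mul hw.pred
    rwa [show (-lam₁ - 1) * θ₂ + -(1:ℝ)/2 * (θ₂ - 1) = (1:ℝ)/2 - θ₂ - θ₂ / (2 * θ₁) by
      rw [hexp]; ring] at h
  have hIS : SymbBd 2 0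
      (fun x => ∫ s in (0:ℝ)..x, k s ^ lam₁ * deriv k s ^ (-(1:ℝ)/2) * deriv (deriv a₁) s) := by
    rcases integral_dichotomy
      (F := fun x => ∫ s in (0:ℝ)..x, k s ^ lam₁ * deriv k s ^ (-(1:ℝ)/2) * deriv (deriv a₁) s)
      (fun _ => rfl) (hgS.2.1.mono fun x hx => hx.continuousAt) with hId | hI0
    · exact SymbBd.primitive_neg hθ₂p hId hgS
    · exact (SymbBd.zero 2 0).congr (hI0.mono fun x hx => hx.symm)
  have h := hf.mul hIS
  rw [add_zero] at h
  exact h.congr (Eventually.of_forall fun x => (ha₂ x).symm)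
end

section
/- Under the hypotheses (H1)–(H3) on the pressure P, with k(ρ) = ∫₀^ρ √(P'(y))/y dy, λ₁ = (3−γ₁)/(2(γ₁−1)), M_{λ₁} = (2λ₁ (2λ₁+1)^{−1/2} ∫_{−1}^{1} (1−z²)^{λ₁} dz)^{−1}, a₁(ρ) = M_{λ₁} k(ρ)^{−λ₁} k'(ρ)^{−1/2}, a₂(ρ) = −(4(λ₁+1))^{−1} k(ρ)^{−λ₁−1} k'(ρ)^{−1/2} ∫₀^ρ k(s)^{λ₁} k'(s)^{−1/2} a₁''(s) ds, b₁(ρ) = M_{λ₁} ρ k(ρ)^{−λ₁−1} k'(ρ)^{1/2}, and b₂(ρ) = −(4(λ₁+1))^{−1} ρ k'(ρ)^{1/2} k(ρ)^{−(λ₁+2)} ∫₀^ρ k(s)^{λ₁} k'(s)^{−1/2} a₁''(s) ds − (4(λ₁+1))^{−1} k(ρ)^{−(λ₁+2)} k'(ρ)^{−1/2} ∫₀^ρ k(s)^{λ₁+1} k'(s)^{−1/2} b₁''(s) ds + (4(λ₁+1))^{−1} k(ρ)^{−(λ₁+2)} k'(ρ)^{−1/2} ∫₀^ρ s k(s)^{λ₁}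 k'(s)^{1/2} a₁''(s) ds, define D(ρ) = a₁(ρ)b₁(ρ) − 2k(ρ)²(a₁(ρ)b₂(ρ) − a₂(ρ)b₁(ρ)). Then for every ρ > 0: D(ρ) = (M_{λ₁}²/(2(λ₁+1))) k(ρ)^{−2λ₁} k'(ρ)^{−2} (k'(ρ) + (d/dρ)(ρ k'(ρ))), and D(ρ) > 0; equivalently, k'(ρ) + (d/dρ)(ρk'(ρ)) = (2P'(ρ) + ρP''(ρ))/(2ρ√(P'(ρ))) > 0. -/
open Set MeasureTheory Filter

open Topology Asymptotics in
theorem aux_integrable (f : ℝ → ℝ) (a ρ : ℝ) (ha : 0 < a) (hρ : 0 < ρ)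
    (hc : ContinuousOn f (Ioi 0)) (hO : f =O[𝓝[>] 0] fun s => s ^ (a - 1)) :
    IntervalIntegrable f volume 0 ρ := by
  obtain ⟨C, hC⟩ := hO.bound
  rw [eventually_iff, mem_nhdsGT_iff_exists_Ioo_subset] at hC
  obtain ⟨δ, hδ, hsub⟩ := hC
  have hδ0 : (0:ℝ) < δ := hδ
  set η := min (δ / 2) ρ with hη
  have hη0 : 0 < η := lt_min (by linarith) hρ
  have hηδ : η < δ := lt_of_le_of_lt (min_le_left _ _) (by linarith)
  have h2 : IntervalIntegrable f volume η ρ := by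
    apply ContinuousOn.intervalIntegrable
    rw [uIcc_of_le (min_le_right _ _)]
    exact hc.mono fun x hx => lt_of_lt_of_le hη0 hx.1
  have h1 : IntervalIntegrable f volume 0 η := by
    have hr : IntervalIntegrable (fun s : ℝ => C * s ^ (a - 1)) volume 0 η :=
      (intervalIntegral.intervalIntegrable_rpow' (by linarith)).const_mul C
    rw [intervalIntegrable_iff_integrableOn_Ioc_of_le hη0.le] at hr ⊢
    refine Integrable.mono' hr ?_ ?_
    · exact (hc.mono fun x hx => hx.1).aestronglyMeasurable measurableSet_Ioc
    · refine (ae_restrict_iff' measurableSet_Ioc).2 (Eventually.of_forall fun x hx => ?_)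
      have := hsub ⟨hx.1, lt_of_le_of_lt hx.2 hηδ⟩
      simp only [mem_ofPred_eq, Real.norm_eq_abs] at this
      rwa [abs_of_nonneg (Real.rpow_nonneg hx.1.le _)] at this
  exact h1.trans h2

theorem aux_second (f q qd : ℝ → ℝ)
    (hf : ∀ s, 0 < s → HasDerivAt f (f s * q s / s) s)
    (hq : ∀ s, 0 < s → HasDerivAt q (qd s / s) s) (s : ℝ) (hs : 0 < s) :
    deriv (deriv f) s = f s * (q s ^ 2 - q s + qd s) / s ^ 2 := by
  have he : deriv f =ᶠ[nhds s] fun t => f t * q t / t := by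
    filter_upwards [Ioi_mem_nhds hs] with t ht
    exact (hf t ht).deriv
  rw [he.deriv_eq]
  have := ((hf s hs).mul (hq s hs)).div (hasDerivAt_id s) hs.ne'
  rw [show (fun t => f t * q t / t) = (f * q) / id from rfl, this.deriv]
  simp only [Pi.mul_apply, id]
  field_simp
  ring

theorem aux_rpow (k q : ℝ → ℝ) (a : ℝ) (s : ℝ) (hs : 0 < s) (hk : 0 < k s)
    (h : HasDerivAt k (k s * q s / s) s) :
    HasDerivAt (fun t => k t ^ a) (k s ^ a * (a * q s) / s) s := by
  have := h.rpow_const (p := a) (Or.inl hk.ne')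
  convert this using 1
  rw [Real.rpow_sub_one hk.ne']
  field_simp

open Topology Asymptotics in
/-- ratio `p / k` tends to `θ` at the right rate -/
theorem aux_ratio (p u k : ℝ → ℝ) (θ : ℝ) (hθ : 0 < θ)
    (hp : ∀ s, 0 < s → 0 < p s) (hk : ∀ s, 0 < s → 0 < k s)
    (hpd : ∀ s, 0 < s → HasDerivAt p (p s * u s / s) s)
    (hkd : ∀ s, 0 < s → HasDerivAt k (p s / s) s)
    (hp0 : Tendsto p (𝓝[>] 0) (𝓝 0)) (hk0 : Tendsto k (𝓝[>] 0) (𝓝 0))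
    (hu : (fun s => u s - θ) =O[𝓝[>] 0] fun s => s ^ (2 * θ)) :
    (fun s => p s / k s - θ) =O[𝓝[>] 0] fun s => s ^ (2 * θ) := by
  obtain ⟨C, hC0, hC⟩ := hu.exists_pos
  have hC := hC.bound
  rw [eventually_iff, mem_nhdsGT_iff_exists_Ioo_subset] at hC
  obtain ⟨δ, hδ, hsub⟩ := hC
  have hδ0 : (0:ℝ) < δ := hδ
  have hub : ∀ s ∈ Ioo 0 δ, |u s - θ| ≤ C * s ^ (2 * θ) := fun s hs => by
    have := hsub hs
    simp only [mem_ofPred_eq, Real.norm_eq_abs] at this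
    rwa [abs_of_nonneg (Real.rpow_nonneg hs.1.le _)] at this
  -- general monotonicity claim
  have key : ∀ G G' : ℝ → ℝ, (∀ s ∈ Ioo 0 δ, HasDerivAt G (G' s) s) →
      (∀ s ∈ Ioo 0 δ, 0 ≤ G' s) → Tendsto G (𝓝[>] 0) (𝓝 0) → ∀ s ∈ Ioo 0 δ, 0 ≤ G s := by
    intro G G' hG hG' h0 s hs
    have hmono : MonotoneOn G (Ioo 0 δ) := by
      apply monotoneOn_of_deriv_nonneg (convex_Ioo 0 δ)
      · exact fun x hx => (hG x hx).continuousAt.continuousWithinAt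
      · rw [interior_Ioo]
        exact fun x hx => (hG x hx).differentiableAt.differentiableWithinAt
      · rw [interior_Ioo]
        intro x hx
        rw [(hG x hx).deriv]
        exact hG' x hx
    refine le_of_tendsto h0 ?_
    filter_upwards [Ioo_mem_nhdsGT hs.1] with t ht
    exact hmono ⟨ht.1, ht.2.trans hs.2⟩ hs ht.2.le
  have hr0 : Tendsto (fun s : ℝ => s ^ (2 * θ)) (𝓝[>] 0) (𝓝 0) := by
    have := (Real.continuousAt_rpow_const 0 (2 * θ) (Or.inr (by linarith))).tendsto
    rw [Real.zero_rpow (by linarith)] at this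
    exact this.mono_left nhdsWithin_le_nhds
  have hrd : ∀ s : ℝ, 0 < s → HasDerivAt (fun s : ℝ => s ^ (2 * θ)) (s ^ (2 * θ) * (2 * θ) / s) s := by
    intro s hs
    have := Real.hasDerivAt_rpow_const (x := s) (p := 2 * θ) (Or.inl hs.ne')
    convert this using 1
    rw [Real.rpow_sub_one hs.ne']
    field_simp
  have lim : ∀ c : ℝ, Tendsto (fun s => c * (p s - θ * k s) + C * (s ^ (2 * θ) * k s)) (𝓝[>] 0) (𝓝 0) := by
    intro c
    have := ((hp0.sub (hk0.const_mul θ)).const_mul c).add ((hr0.mul hk0).const_mul C)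
    simpa using this
  have der : ∀ c : ℝ, ∀ s, 0 < s → HasDerivAt (fun s => c * (p s - θ * k s) + C * (s ^ (2 * θ) * k s))
      (c * (p s * u s / s - θ * (p s / s)) + C * (s ^ (2 * θ) * (2 * θ) / s * k s + s ^ (2 * θ) * (p s / s))) s :=
    fun c s hs => (((hpd s hs).sub ((hkd s hs).const_mul θ)).const_mul c).add
      (((hrd s hs).mul (hkd s hs)).const_mul C)
  have fin : ∀ c : ℝ, |c| = 1 → ∀ s ∈ Ioo 0 δ, 0 ≤ c * (p s - θ * k s) + C * (s ^ (2 * θ) * k s) := by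
    intro c hc
    refine key _ _ (fun s hs => der c s hs.1) ?_ (lim c)
    intro s hs
    have hs0 := hs.1
    have h1 : 0 ≤ c * (u s - θ) + C * s ^ (2 * θ) := by
      have : |c * (u s - θ)| ≤ C * s ^ (2 * θ) := by rw [abs_mul, hc, one_mul]; exact hub s hs
      linarith [(abs_le.1 this).1]
    have h2 := hp s hs0
    have h3 := hk s hs0
    have h4 : 0 ≤ (c * (u s - θ) + C * s ^ (2 * θ)) * (p s / s) := by positivity
    have h5 : 0 ≤ C * (s ^ (2 * θ) * (2 * θ) / s * k s) := by positivity
    calc 0 ≤ _ := add_nonneg h4 h5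
      _ = _ := by ring
  refine IsBigO.of_bound C ?_
  filter_upwards [Ioo_mem_nhdsGT hδ0] with s hs
  have hks := hk s hs.1
  have h1 := fin 1 (by simp) s hs
  have h2 := fin (-1) (by simp) s hs
  rw [Real.norm_eq_abs, Real.norm_eq_abs, abs_of_nonneg (Real.rpow_nonneg hs.1.le _),
    show p s / k s - θ = (p s - θ * k s) / k s by field_simp, abs_div, abs_of_pos hks,
    div_le_iff₀ hks, abs_le]
  constructor <;> linarith

open Topology Asymptotics in
/-- The core computation. -/
theorem aux_core (p u v k : ℝ → ℝ) (θ lam M : ℝ) (hθ : 0 < θ) (hlam : 2 * lam * θ = 1 - θ)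
    (hp : ∀ s, 0 < s → 0 < p s) (hk : ∀ s, 0 < s → 0 < k s)
    (hpd : ∀ s, 0 < s → HasDerivAt p (p s * u s / s) s)
    (hud : ∀ s, 0 < s → HasDerivAt u (v s / s) s)
    (hvc : ContinuousOn v (Ioi 0))
    (hkd : ∀ s, 0 < s → HasDerivAt k (p s / s) s)
    (hp0 : Tendsto p (𝓝[>] 0) (𝓝 0)) (hk0 : Tendsto k (𝓝[>] 0) (𝓝 0))
    (hu : (fun s => u s - θ) =O[𝓝[>] 0] fun s => s ^ (2 * θ))
    (hv : v =O[𝓝[>] 0] fun s => s ^ (2 * θ))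
    (a₁ b₁ : ℝ → ℝ)
    (ha₁ : ∀ ρ : ℝ, a₁ ρ = M * k ρ ^ (-lam) * deriv k ρ ^ (-(1:ℝ)/2))
    (hb₁ : ∀ ρ : ℝ, b₁ ρ = M * ρ * k ρ ^ (-lam - 1) * deriv k ρ ^ ((1:ℝ)/2))
    (ρ : ℝ) (hρ : 0 < ρ) :
    (∫ s in (0:ℝ)..ρ, k s ^ (lam + 1) * deriv k s ^ (-(1:ℝ)/2) * deriv (deriv b₁) s)
      - (∫ s in (0:ℝ)..ρ, s * k s ^ lam * deriv k s ^ ((1:ℝ)/2) * deriv (deriv a₁) s)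
      = M * (u ρ - (2 * lam + 2) * (p ρ / k ρ) + 1) := by
  have hO := aux_ratio p u k θ hθ hp hk hpd hkd hp0 hk0 hu
  set h : ℝ → ℝ := fun s => p s / k s with hh
  have hdk : ∀ s, 0 < s → deriv k s = p s / s := fun s hs => (hkd s hs).deriv
  have hdkpos : ∀ s, 0 < s → 0 < deriv k s := fun s hs => by
    rw [hdk s hs]; exact div_pos (hp s hs) hs
  have hkd' : ∀ s, 0 < s → HasDerivAt k (k s * h s / s) s := fun s hs => by
    refine HasDerivAt.congr_deriv (hkd s hs) ?_
    have := (hk s hs).ne'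
    simp only [hh]; field_simp
  have hhd : ∀ s, 0 < s → HasDerivAt h (h s * (u s - h s) / s) s := fun s hs => by
    refine HasDerivAt.congr_deriv ((hpd s hs).div (hkd s hs) (hk s hs).ne') ?_
    have := (hk s hs).ne'
    simp only [hh]; field_simp
  have hkkd : ∀ s, 0 < s → HasDerivAt (deriv k) (deriv k s * (u s - 1) / s) s := fun s hs => by
    have he : deriv k =ᶠ[𝓝 s] p / id := by
      filter_upwards [Ioi_mem_nhds hs] with t ht
      exact hdk t ht
    refine HasDerivAt.congr_of_eventuallyEq ?_ he
    refine HasDerivAt.congr_deriv ((hpd s hs).div (hasDerivAt_id s) hs.ne') ?_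
    rw [hdk s hs]; simp only [id]; field_simp
  set q : ℝ → ℝ := fun s => -lam * h s - (u s - 1) / 2 with hq
  set qd : ℝ → ℝ := fun s => -lam * (h s * (u s - h s)) - v s / 2 with hqd
  have hqD : ∀ s, 0 < s → HasDerivAt q (qd s / s) s := fun s hs => by
    refine HasDerivAt.congr_deriv (((hhd s hs).const_mul (-lam)).sub (((hud s hs).sub_const 1).div_const 2)) ?_
    simp only [hqd]; ring
  have haD : ∀ s, 0 < s → HasDerivAt a₁ (a₁ s * q s / s) s := fun s hs => by
    have h1 := aux_rpow k h (-lam) s hs (hk s hs) (hkd' s hs)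
    have h2 := aux_rpow (deriv k) (fun s => u s - 1) (-(1:ℝ)/2) s hs (hdkpos s hs) (hkkd s hs)
    have h3 := (h1.const_mul M).mul h2
    rw [show a₁ = (fun t => M * k t ^ (-lam)) * (fun t => deriv k t ^ (-(1:ℝ)/2)) from funext ha₁]
    refine HasDerivAt.congr_deriv (h3) ?_
    simp only [Pi.mul_apply, hq]; ring
  set q2 : ℝ → ℝ := fun s => q s + (u s - h s) with hq2
  set q2d : ℝ → ℝ := fun s => qd s + (v s - h s * (u s - h s)) with hq2d
  have hq2D : ∀ s, 0 < s → HasDerivAt q2 (q2d s / s) s := fun s hs => by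
    refine HasDerivAt.congr_deriv ((hqD s hs).add ((hud s hs).sub (hhd s hs))) ?_
    simp only [hq2d]; ring
  have hbD : ∀ s, 0 < s → HasDerivAt b₁ (b₁ s * q2 s / s) s := fun s hs => by
    have h1 := aux_rpow k h (-lam - 1) s hs (hk s hs) (hkd' s hs)
    have h2 := aux_rpow (deriv k) (fun s => u s - 1) ((1:ℝ)/2) s hs (hdkpos s hs) (hkkd s hs)
    have h3 := (((hasDerivAt_id s).const_mul M).mul h1).mul h2
    rw [show b₁ = ((fun t => M * t) * (fun t => k t ^ (-lam - 1))) * (fun t => deriv k t ^ ((1:ℝ)/2)) from funext hb₁]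
    refine HasDerivAt.congr_deriv (h3) ?_
    simp only [Pi.mul_apply, hq2, hq, id]; field_simp; ring
  have e3 : ∀ s, 0 < s → s * k s ^ lam * deriv k s ^ ((1:ℝ)/2) * deriv (deriv a₁) s
      = M * (q s ^ 2 - q s + qd s) / s := fun s hs => by
    rw [aux_second a₁ q qd haD hqD s hs, ha₁, neg_div, Real.rpow_neg (hk s hs).le,
      Real.rpow_neg (hdkpos s hs).le]
    have h1 := (Real.rpow_pos_of_pos (hk s hs) lam).ne'
    have h2 := (Real.rpow_pos_of_pos (hdkpos s hs) (1/2)).ne'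
    field_simp
  have e2 : ∀ s, 0 < s → k s ^ (lam + 1) * deriv k s ^ (-(1:ℝ)/2) * deriv (deriv b₁) s
      = M * (q2 s ^ 2 - q2 s + q2d s) / s := fun s hs => by
    rw [aux_second b₁ q2 q2d hbD hq2D s hs, hb₁, neg_div,
      show -lam - 1 = -(lam + 1) by ring, Real.rpow_neg (hk s hs).le,
      Real.rpow_neg (hdkpos s hs).le]
    have h1 := (Real.rpow_pos_of_pos (hk s hs) (lam + 1)).ne'
    have h2 := (Real.rpow_pos_of_pos (hdkpos s hs) (1/2)).ne'
    field_simp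
  have huc : ContinuousOn u (Ioi 0) := fun s hs => (hud s hs).continuousAt.continuousWithinAt
  have hhc : ContinuousOn h (Ioi 0) := fun s hs => (hhd s hs).continuousAt.continuousWithinAt
  have hqc : ContinuousOn q (Ioi 0) := fun s hs => (hqD s hs).continuousAt.continuousWithinAt
  have hq2c : ContinuousOn q2 (Ioi 0) := fun s hs => (hq2D s hs).continuousAt.continuousWithinAt
  have hqdc : ContinuousOn qd (Ioi 0) := by simp only [hqd]; fun_prop
  have hq2dc : ContinuousOn q2d (Ioi 0) := by simp only [hq2d]; fun_prop
  have hr0 : Tendsto (fun s : ℝ => s ^ (2 * θ)) (𝓝[>] 0) (𝓝 0) := by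
    have := (Real.continuousAt_rpow_const 0 (2 * θ) (Or.inr (by linarith))).tendsto
    rw [Real.zero_rpow (by linarith)] at this
    exact this.mono_left nhdsWithin_le_nhds
  have hht : Tendsto h (𝓝[>] 0) (𝓝 θ) := tendsto_sub_nhds_zero_iff.1 (hO.trans_tendsto hr0)
  have hut : Tendsto u (𝓝[>] 0) (𝓝 θ) := tendsto_sub_nhds_zero_iff.1 (hu.trans_tendsto hr0)
  have huh : (fun s => u s - h s) =O[𝓝[>] 0] fun s => s ^ (2 * θ) :=
    (hu.sub hO).congr_left fun s => by simp only [hh]; ring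
  have hhuh : (fun s => h s * (u s - h s)) =O[𝓝[>] 0] fun s => s ^ (2 * θ) := by
    simpa using (hht.isBigO_one ℝ).mul huh
  have hqO : q =O[𝓝[>] 0] fun s => s ^ (2 * θ) := by
    refine ((hO.const_mul_left (-lam)).sub (hu.const_mul_left (1/2))).congr_left fun s => ?_
    simp only [hq, hh]; linear_combination (1/2) * hlam
  have hqdO : qd =O[𝓝[>] 0] fun s => s ^ (2 * θ) := by
    refine ((hhuh.const_mul_left (-lam)).sub (hv.const_mul_left (1/2))).congr_left fun s => ?_
    simp only [hqd]; ring
  have hq2O : q2 =O[𝓝[>] 0] fun s => s ^ (2 * θ) := hqO.add huh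
  have hq2dO : q2d =O[𝓝[>] 0] fun s => s ^ (2 * θ) := hqdO.add (hv.sub hhuh)
  have gen : ∀ f g : ℝ → ℝ, ContinuousOn f (Ioi 0) → ContinuousOn g (Ioi 0) →
      (f =O[𝓝[>] 0] fun s => s ^ (2 * θ)) → (g =O[𝓝[>] 0] fun s => s ^ (2 * θ)) →
      IntervalIntegrable (fun s => M * (f s ^ 2 - f s + g s) / s) volume 0 ρ := by
    intro f g hf hg hfO hgO
    apply aux_integrable _ (2 * θ) ρ (by linarith) hρ
    · have : ∀ x ∈ Ioi (0:ℝ), x ≠ 0 := fun x hx => ne_of_gt hx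
      fun_prop (disch := assumption)
    · have h1 : (fun s => f s ^ 2) =O[𝓝[>] 0] fun s => s ^ (2 * θ) := by
        have := ((hfO.trans_tendsto hr0).isBigO_one ℝ).mul hfO
        simpa [sq] using this
      have h2 := (((h1.sub hfO).add hgO).const_mul_left M).mul
        (isBigO_refl (fun s : ℝ => s⁻¹) (𝓝[>] 0))
      refine h2.congr' ?_ ?_
      · filter_upwards with s
        rw [div_eq_mul_inv]
      · filter_upwards [self_mem_nhdsWithin] with s hs
        rw [Real.rpow_sub_one (ne_of_gt hs), div_eq_mul_inv]
  have i3 := gen q qd hqc hqdc hqO hqdO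
  have i2 := gen q2 q2d hq2c hq2dc hq2O hq2dO
  have c3 : (∫ s in (0:ℝ)..ρ, s * k s ^ lam * deriv k s ^ ((1:ℝ)/2) * deriv (deriv a₁) s)
      = ∫ s in (0:ℝ)..ρ, M * (q s ^ 2 - q s + qd s) / s := by
    apply intervalIntegral.integral_congr_ae
    filter_upwards with s hs
    rw [uIoc_of_le hρ.le] at hs
    exact e3 s hs.1
  have c2 : (∫ s in (0:ℝ)..ρ, k s ^ (lam + 1) * deriv k s ^ (-(1:ℝ)/2) * deriv (deriv b₁) s)
      = ∫ s in (0:ℝ)..ρ, M * (q2 s ^ 2 - q2 s + q2d s) / s := by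
    apply intervalIntegral.integral_congr_ae
    filter_upwards with s hs
    rw [uIoc_of_le hρ.le] at hs
    exact e2 s hs.1
  rw [c2, c3, ← intervalIntegral.integral_sub i2 i3]
  have FD : ∀ s, 0 < s → HasDerivAt (fun s => M * (u s - (2 * lam + 2) * h s))
      (M * (q2 s ^ 2 - q2 s + q2d s) / s - M * (q s ^ 2 - q s + qd s) / s) s := fun s hs => by
    refine HasDerivAt.congr_deriv (((hud s hs).sub ((hhd s hs).const_mul (2 * lam + 2))).const_mul M) ?_
    simp only [hq2, hq2d, hq, hqd]; field_simp; ring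
  rw [intervalIntegral.integral_eq_sub_of_hasDerivAt_of_tendsto hρ (fun s hs => FD s hs.1)
    (i2.sub i3) ((hut.sub (hht.const_mul (2 * lam + 2))).const_mul M)
    ((FD ρ hρ).continuousAt.tendsto.mono_left nhdsWithin_le_nhds)]
  linear_combination M * hlam

open Topology Asymptotics in
/-- Behaviour of the pressure near the vacuum. -/
theorem aux_small (P Q : ℝ → ℝ) (R γ κ C : ℝ)
    (hP' : ∀ ρ : ℝ, 0 < ρ → 0 < deriv P ρ)
    (hR : 0 < R) (hγ : 1 < γ) (hκ : 0 < κ)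
    (hQ : ContDiffOn ℝ 4 Q (Ioi 0))
    (hPs : ∀ ρ ∈ Ico (0:ℝ) R, P ρ = κ * ρ ^ γ * (1 + Q ρ))
    (hQb : ∀ ρ ∈ Ioo (0:ℝ) R, ∀ j : ℕ, j ≤ 4 →
      |iteratedDeriv j Q ρ| ≤ C * ρ ^ (γ - 1 - (j : ℝ))) :
    ((fun s => s * deriv (deriv P) s / (2 * deriv P s) - (γ - 1) / 2)
      =O[𝓝[>] 0] fun s => s ^ (γ - 1)) ∧
    ((fun s => s * deriv (fun s => s * deriv (deriv P) s / (2 * deriv P s)) s)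
      =O[𝓝[>] 0] fun s => s ^ (γ - 1)) ∧
    ((fun s => Real.sqrt (deriv P s)) =O[𝓝[>] 0] fun s => s ^ ((γ - 1) / 2)) := by
  set Q1 := deriv Q with hQ1
  set Q2 := deriv Q1 with hQ2
  set Q3 := deriv Q2 with hQ3
  have cd1 : ContDiffOn ℝ 3 Q1 (Ioi 0) := hQ.deriv_of_isOpen isOpen_Ioi (by norm_num)
  have cd2 : ContDiffOn ℝ 2 Q2 (Ioi 0) := cd1.deriv_of_isOpen isOpen_Ioi (by norm_num)
  have d0 : ∀ s, 0 < s → HasDerivAt Q (Q1 s) s := fun s hs =>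
    ((hQ.differentiableOn (by norm_num)).differentiableAt (Ioi_mem_nhds hs)).hasDerivAt
  have d1 : ∀ s, 0 < s → HasDerivAt Q1 (Q2 s) s := fun s hs =>
    ((cd1.differentiableOn (by norm_num)).differentiableAt (Ioi_mem_nhds hs)).hasDerivAt
  have d2 : ∀ s, 0 < s → HasDerivAt Q2 (Q3 s) s := fun s hs =>
    ((cd2.differentiableOn (by norm_num)).differentiableAt (Ioi_mem_nhds hs)).hasDerivAt
  have hI : Ioo 0 R ∈ 𝓝[>] (0:ℝ) := Ioo_mem_nhdsGT hR
  have bO : ∀ j : ℕ, j ≤ 4 → (fun s => s ^ j * iteratedDeriv j Q s) =O[𝓝[>] 0] fun s => s ^ (γ - 1) := by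
    intro j hj
    refine IsBigO.of_bound C ?_
    filter_upwards [hI] with s hs
    have := hQb s hs j hj
    have hs0 := hs.1
    rw [Real.rpow_sub hs0 (γ - 1), Real.rpow_natCast] at this
    rw [Real.norm_eq_abs, Real.norm_eq_abs, abs_of_nonneg (Real.rpow_nonneg hs.1.le _), abs_mul,
      abs_of_pos (pow_pos hs0 j)]
    calc s ^ j * |iteratedDeriv j Q s| ≤ s ^ j * (C * (s ^ (γ - 1) / s ^ j)) := by gcongr
      _ = _ := by field_simp
  have o0 : Q =O[𝓝[>] 0] fun s => s ^ (γ - 1) := by simpa using bO 0 (by norm_num)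
  have o1 : (fun s => s * Q1 s) =O[𝓝[>] 0] fun s => s ^ (γ - 1) := by
    simpa [iteratedDeriv_one] using bO 1 (by norm_num)
  have o2 : (fun s => s ^ 2 * Q2 s) =O[𝓝[>] 0] fun s => s ^ (γ - 1) := by
    simpa [iteratedDeriv_succ, iteratedDeriv_zero] using bO 2 (by norm_num)
  have o3 : (fun s => s ^ 3 * Q3 s) =O[𝓝[>] 0] fun s => s ^ (γ - 1) := by
    simpa [iteratedDeriv_succ, iteratedDeriv_zero] using bO 3 (by norm_num)
  set A : ℝ → ℝ := fun s => γ * (1 + Q s) + s * Q1 s with hA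
  set B : ℝ → ℝ := fun s => (γ + 1) * (s * Q1 s) + s ^ 2 * Q2 s with hB
  set E : ℝ → ℝ := fun s => (γ + 1) * (s * Q1 s) + (γ + 3) * (s ^ 2 * Q2 s) + s ^ 3 * Q3 s with hE
  have dA : ∀ s, 0 < s → HasDerivAt A (B s / s) s := fun s hs => by
    refine HasDerivAt.congr_deriv ((((d0 s hs).const_add 1).const_mul γ).add
      ((hasDerivAt_id s).mul (d1 s hs))) ?_
    simp only [hB, id]; field_simp; ring
  have dB : ∀ s, 0 < s → HasDerivAt B (E s / s) s := fun s hs => by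
    refine HasDerivAt.congr_deriv ((((hasDerivAt_id s).mul (d1 s hs)).const_mul (γ + 1)).add
      ((hasDerivAt_pow 2 s).mul (d2 s hs))) ?_
    simp only [hE, id]; field_simp; ring
  have rp : ∀ a s : ℝ, 0 < s → HasDerivAt (fun s : ℝ => s ^ a) (s ^ a * a / s) s := by
    intro a s hs
    refine (Real.hasDerivAt_rpow_const (x := s) (p := a) (Or.inl hs.ne')).congr_deriv ?_
    rw [Real.rpow_sub_one hs.ne']
    field_simp
  have p1 : ∀ s ∈ Ioo 0 R, deriv P s = κ * s ^ (γ - 1) * A s := fun s hs => by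
    have he : P =ᶠ[𝓝 s] fun s => κ * s ^ γ * (1 + Q s) := by
      filter_upwards [Ioo_mem_nhds hs.1 hs.2] with t ht
      exact hPs t ⟨ht.1.le, ht.2⟩
    have hs0 := hs.1
    have := (((rp γ s hs.1).const_mul κ).mul ((d0 s hs.1).const_add 1)).congr_of_eventuallyEq he
    rw [this.deriv, Real.rpow_sub_one hs0.ne']
    simp only [hA]; field_simp
  have p2 : ∀ s ∈ Ioo 0 R, deriv (deriv P) s = κ * s ^ (γ - 1) * ((γ - 1) * A s + B s) / s := fun s hs => by
    have he : deriv P =ᶠ[𝓝 s] fun s => κ * s ^ (γ - 1) * A s := by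
      filter_upwards [Ioo_mem_nhds hs.1 hs.2] with t ht
      exact p1 t ht
    have hs0 := hs.1
    have := (((rp (γ - 1) s hs.1).const_mul κ).mul (dA s hs.1)).congr_of_eventuallyEq he
    rw [this.deriv]
    field_simp
  have hApos : ∀ s ∈ Ioo 0 R, 0 < A s := fun s hs => by
    have h1 := hP' s hs.1
    rw [p1 s hs] at h1
    exact pos_of_mul_pos_right h1 (mul_nonneg hκ.le (Real.rpow_nonneg hs.1.le _))
  have hu : ∀ s ∈ Ioo 0 R, s * deriv (deriv P) s / (2 * deriv P s) = ((γ - 1) + B s / A s) / 2 := fun s hs => by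
    rw [p2 s hs, p1 s hs]
    have h1 := (hApos s hs).ne'
    have h2 := (Real.rpow_pos_of_pos hs.1 (γ - 1)).ne'
    have h3 := hs.1.ne'
    field_simp
  have hv : ∀ s ∈ Ioo 0 R, s * deriv (fun s => s * deriv (deriv P) s / (2 * deriv P s)) s
      = (E s * (A s)⁻¹ - (B s * (A s)⁻¹) * (B s * (A s)⁻¹)) * (1 / 2) := fun s hs => by
    have he : (fun s => s * deriv (deriv P) s / (2 * deriv P s)) =ᶠ[𝓝 s]
        fun s => ((γ - 1) + B s / A s) / 2 := by
      filter_upwards [Ioo_mem_nhds hs.1 hs.2] with t ht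
      exact hu t ht
    have h1 := (hApos s hs).ne'
    have h3 := hs.1.ne'
    have := ((((dB s hs.1).div (dA s hs.1) h1).const_add (γ - 1)).div_const 2).congr_of_eventuallyEq he
    rw [this.deriv]
    field_simp
  have hr0 : Tendsto (fun s : ℝ => s ^ (γ - 1)) (𝓝[>] 0) (𝓝 0) := by
    have := (Real.continuousAt_rpow_const 0 (γ - 1) (Or.inr (by linarith))).tendsto
    rw [Real.zero_rpow (by linarith)] at this
    exact this.mono_left nhdsWithin_le_nhds
  have At : Tendsto A (𝓝[>] 0) (𝓝 γ) := by
    have := (((o0.trans_tendsto hr0).const_add 1).const_mul γ).add (o1.trans_tendsto hr0)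
    simpa using this
  have Ai := (At.inv₀ (by linarith : γ ≠ 0)).isBigO_one ℝ
  have oB : B =O[𝓝[>] 0] fun s => s ^ (γ - 1) := (o1.const_mul_left _).add o2
  have oE : E =O[𝓝[>] 0] fun s => s ^ (γ - 1) :=
    ((o1.const_mul_left _).add (o2.const_mul_left _)).add o3
  have oBA : (fun s => B s * (A s)⁻¹) =O[𝓝[>] 0] fun s => s ^ (γ - 1) := by
    simpa using oB.mul Ai
  have oEA : (fun s => E s * (A s)⁻¹) =O[𝓝[>] 0] fun s => s ^ (γ - 1) := by
    simpa using oE.mul Ai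
  have oBB : (fun s => (B s * (A s)⁻¹) * (B s * (A s)⁻¹)) =O[𝓝[>] 0] fun s => s ^ (γ - 1) := by
    simpa using oBA.mul ((oBA.trans_tendsto hr0).isBigO_one ℝ)
  refine ⟨?_, ?_, ?_⟩
  · refine (oBA.const_mul_left (1/2)).congr' ?_ EventuallyEq.rfl
    filter_upwards [hI] with s hs
    rw [hu s hs]; ring
  · refine ((oEA.sub oBB).const_mul_left (1/2)).congr' ?_ EventuallyEq.rfl
    filter_upwards [hI] with s hs
    rw [hv s hs]; ring
  · have h1 : Tendsto (fun s => Real.sqrt (κ * A s)) (𝓝[>] 0) (𝓝 (Real.sqrt (κ * γ))) :=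
      (At.const_mul κ).sqrt
    have h2 := (h1.isBigO_one ℝ).mul (isBigO_refl (fun s : ℝ => s ^ ((γ - 1) / 2)) (𝓝[>] 0))
    refine h2.congr' ?_ ?_
    · filter_upwards [hI] with s hs
      rw [p1 s hs, show κ * s ^ (γ - 1) * A s = (κ * A s) * s ^ (γ - 1) by ring,
        Real.sqrt_mul (mul_pos hκ (hApos s hs)).le, Real.sqrt_eq_rpow (s ^ (γ - 1)),
        ← Real.rpow_mul hs.1.le]
      congr 2
      ring
    · filter_upwards with s
      simp

theorem kernel_determinant_positive
    (P Q₁ Q₂ : ℝ → ℝ) (ρstar ρss γ₁ γ₂ κ₁ κ₂ Cs Css εe : ℝ)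
    (hPC1 : ContDiffOn ℝ 1 P (Ici 0))
    (hPC4 : ContDiffOn ℝ 4 P (Ioi 0))
    (hH1 : ∀ ρ : ℝ, 0 < ρ → 0 < deriv P ρ ∧ 0 < 2 * deriv P ρ + ρ * deriv (deriv P) ρ)
    (hρstar : 0 < ρstar) (hγ₁ : 1 < γ₁) (hγ₁3 : γ₁ < 3) (hκ₁ : 0 < κ₁) (hCs : 0 < Cs)
    (hQ₁C4 : ContDiffOn ℝ 4 Q₁ (Ioi 0))
    (hPsmall : ∀ ρ ∈ Ico (0:ℝ) ρstar, P ρ = κ₁ * ρ ^ γ₁ * (1 + Q₁ ρ))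
    (hQ₁bd : ∀ ρ ∈ Ioo (0:ℝ) ρstar, ∀ j : ℕ, j ≤ 4 →
      |iteratedDeriv j Q₁ ρ| ≤ Cs * ρ ^ (γ₁ - 1 - (j : ℝ)))
    (hρss : ρstar < ρss) (hγ₂ : 6/5 < γ₂) (hγ₂1 : γ₂ ≤ γ₁) (hκ₂ : 0 < κ₂)
    (hεe : 0 < εe) (hCss : 0 < Css)
    (hQ₂C4 : ContDiffOn ℝ 4 Q₂ (Ioi 0))
    (hPlarge : ∀ ρ : ℝ, ρss ≤ ρ → P ρ = κ₂ * ρ ^ γ₂ * (1 + Q₂ ρ))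
    (hQ₂bd : ∀ ρ : ℝ, ρss ≤ ρ → ∀ j : ℕ, j ≤ 4 →
      |iteratedDeriv j Q₂ ρ| ≤ Css * ρ ^ (-εe - (j : ℝ)))
    (lam₁ Mlam θ₁ θ₂ : ℝ)
    (hlam₁ : lam₁ = (3 - γ₁) / (2 * (γ₁ - 1)))
    (hMlam : Mlam = (2 * lam₁ / Real.sqrt (2 * lam₁ + 1) * ∫ z in (-1:ℝ)..1, (1 - z ^ 2) ^ lam₁)⁻¹)
    (hθ₁ : θ₁ = (γ₁ - 1) / 2) (hθ₂ : θ₂ = (γ₂ - 1) / 2)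
    (k a₁ a₂ : ℝ → ℝ)
    (hk : ∀ ρ : ℝ, k ρ = ∫ y in (0:ℝ)..ρ, Real.sqrt (deriv P y) / y)
    (ha₁ : ∀ ρ : ℝ, a₁ ρ = Mlam * k ρ ^ (-lam₁) * deriv k ρ ^ (-(1:ℝ)/2))
    (ha₂ : ∀ ρ : ℝ, a₂ ρ = -(4 * (lam₁ + 1))⁻¹ * k ρ ^ (-lam₁ - 1) * deriv k ρ ^ (-(1:ℝ)/2) *
      ∫ s in (0:ℝ)..ρ, k s ^ lam₁ * deriv k s ^ (-(1:ℝ)/2) * deriv (deriv a₁) s)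
    (b₁ b₂ : ℝ → ℝ)
    (hb₁ : ∀ ρ : ℝ, b₁ ρ = Mlam * ρ * k ρ ^ (-lam₁ - 1) * deriv k ρ ^ ((1:ℝ)/2))
    (hb₂ : ∀ ρ : ℝ, b₂ ρ =
      -(4 * (lam₁ + 1))⁻¹ * ρ * deriv k ρ ^ ((1:ℝ)/2) * k ρ ^ (-(lam₁ + 2)) *
        (∫ s in (0:ℝ)..ρ, k s ^ lam₁ * deriv k s ^ (-(1:ℝ)/2) * deriv (deriv a₁) s)
      - (4 * (lam₁ + 1))⁻¹ * k ρ ^ (-(lam₁ + 2)) * deriv k ρ ^ (-(1:ℝ)/2) *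
        (∫ s in (0:ℝ)..ρ, k s ^ (lam₁ + 1) * deriv k s ^ (-(1:ℝ)/2) * deriv (deriv b₁) s)
      + (4 * (lam₁ + 1))⁻¹ * k ρ ^ (-(lam₁ + 2)) * deriv k ρ ^ (-(1:ℝ)/2) *
        (∫ s in (0:ℝ)..ρ, s * k s ^ lam₁ * deriv k s ^ ((1:ℝ)/2) * deriv (deriv a₁) s))
    (D : ℝ → ℝ)
    (hD : ∀ ρ : ℝ, D ρ = a₁ ρ * b₁ ρ - 2 * k ρ ^ 2 * (a₁ ρ * b₂ ρ - a₂ ρ * b₁ ρ)) :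
    ∀ ρ : ℝ, 0 < ρ →
      (D ρ = Mlam ^ 2 / (2 * (lam₁ + 1)) * k ρ ^ (-(2 * lam₁)) * deriv k ρ ^ (-(2:ℝ)) *
        (deriv k ρ + deriv (fun r => r * deriv k r) ρ)) ∧
      0 < D ρ ∧
      (deriv k ρ + deriv (fun r => r * deriv k r) ρ
        = (2 * deriv P ρ + ρ * deriv (deriv P) ρ) / (2 * ρ * Real.sqrt (deriv P ρ))) ∧
      0 < deriv k ρ + deriv (fun r => r * deriv k r) ρ := by
  have hθ : 0 < (γ₁ - 1) / 2 := by linarith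
  have h2θ : 2 * ((γ₁ - 1) / 2) = γ₁ - 1 := by ring
  obtain ⟨hu, hv, hpO⟩ := aux_small P Q₁ ρstar γ₁ κ₁ Cs (fun ρ h => (hH1 ρ h).1) hρstar hγ₁ hκ₁
    hQ₁C4 hPsmall hQ₁bd
  set u : ℝ → ℝ := fun s => s * deriv (deriv P) s / (2 * deriv P s) with hu_def
  set v : ℝ → ℝ := fun s => s * deriv u s with hv_def
  set p : ℝ → ℝ := fun s => Real.sqrt (deriv P s) with hp_def
  have hP1 : ContDiffOn ℝ 3 (deriv P) (Ioi 0) := hPC4.deriv_of_isOpen isOpen_Ioi (by norm_num)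
  have hP2 : ContDiffOn ℝ 2 (deriv (deriv P)) (Ioi 0) := hP1.deriv_of_isOpen isOpen_Ioi (by norm_num)
  have hpos : ∀ s, 0 < s → 0 < deriv P s := fun s hs => (hH1 s hs).1
  have huC : ContDiffOn ℝ 2 u (Ioi 0) := by
    refine (contDiffOn_id.mul hP2).div (contDiffOn_const.mul (hP1.of_le (by norm_num))) ?_
    intro x hx
    exact (mul_pos two_pos (hpos x hx)).ne'
  have hud : ∀ s, 0 < s → HasDerivAt u (v s / s) s := fun s hs => by
    refine HasDerivAt.congr_deriv ((huC.differentiableOn (by norm_num)).differentiableAt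
      (Ioi_mem_nhds hs)).hasDerivAt ?_
    simp only [hv_def]; field_simp
  have hvc : ContinuousOn v (Ioi 0) :=
    continuousOn_id.mul (huC.continuousOn_deriv_of_isOpen isOpen_Ioi (by norm_num))
  have hp : ∀ s, 0 < s → 0 < p s := fun s hs => Real.sqrt_pos.2 (hpos s hs)
  have hpd : ∀ s, 0 < s → HasDerivAt p (p s * u s / s) s := fun s hs => by
    have h1 : HasDerivAt (deriv P) (deriv (deriv P) s) s :=
      ((hP1.differentiableOn (by norm_num)).differentiableAt (Ioi_mem_nhds hs)).hasDerivAt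
    refine (h1.sqrt (hpos s hs).ne').congr_deriv ?_
    have h2 : p s ^ 2 = deriv P s := Real.sq_sqrt (hpos s hs).le
    have h3 := (hp s hs).ne'
    simp only [hu_def]
    change deriv (deriv P) s / (2 * p s) = _
    rw [← h2]
    field_simp
  have hpc : ContinuousOn p (Ioi 0) := fun s hs => (hpd s hs).continuousAt.continuousWithinAt
  have hgc : ContinuousOn (fun y => p y / y) (Ioi 0) :=
    hpc.div continuousOn_id fun x hx => ne_of_gt hx
  have hgO : (fun y => p y / y) =O[nhdsWithin 0 (Ioi 0)] fun s => s ^ ((γ₁ - 1) / 2 - 1) := by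
    refine (hpO.mul (Asymptotics.isBigO_refl (fun s : ℝ => s⁻¹) (nhdsWithin 0 (Ioi 0)))).congr' ?_ ?_
    · filter_upwards with s
      rw [div_eq_mul_inv]
    · filter_upwards [self_mem_nhdsWithin] with s hs
      rw [Real.rpow_sub_one (ne_of_gt hs)]; exact (div_eq_mul_inv _ _).symm
  have hgi : ∀ ρ, 0 < ρ → IntervalIntegrable (fun y => p y / y) volume 0 ρ := fun ρ hρ =>
    aux_integrable _ _ ρ hθ hρ hgc hgO
  have hkd : ∀ s, 0 < s → HasDerivAt k (p s / s) s := fun s hs => by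
    rw [show k = fun ρ => ∫ y in (0:ℝ)..ρ, p y / y from funext hk]
    exact intervalIntegral.integral_hasDerivAt_right (hgi s hs)
      (hgc.stronglyMeasurableAtFilter isOpen_Ioi s hs) (hgc.continuousAt (Ioi_mem_nhds hs))
  have hkpos : ∀ s, 0 < s → 0 < k s := fun s hs => by
    rw [hk]
    exact intervalIntegral.intervalIntegral_pos_of_pos_on (hgi s hs)
      (fun x hx => div_pos (hp x hx.1) hx.1) hs
  have hr0 : Tendsto (fun s : ℝ => s ^ ((γ₁ - 1) / 2)) (nhdsWithin 0 (Ioi 0)) (nhds 0) := by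
    have := (Real.continuousAt_rpow_const 0 ((γ₁ - 1) / 2) (Or.inr (by linarith))).tendsto
    rw [Real.zero_rpow (by linarith)] at this
    exact this.mono_left nhdsWithin_le_nhds
  have hp0 : Tendsto p (nhdsWithin 0 (Ioi 0)) (nhds 0) := hpO.trans_tendsto hr0
  have hk0 : Tendsto k (nhdsWithin 0 (Ioi 0)) (nhds 0) := by
    have h1 := intervalIntegral.continuousOn_primitive_interval
      (f := fun y => p y / y) (a := (0:ℝ)) (b := 1) (μ := volume)
      ((intervalIntegrable_iff' (by simp)).1 (hgi 1 one_pos))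
    have h2 := (h1 0 left_mem_uIcc).tendsto
    rw [uIcc_of_le zero_le_one, intervalIntegral.integral_same] at h2
    rw [show k = fun ρ => ∫ y in (0:ℝ)..ρ, p y / y from funext hk]
    refine h2.mono_left ?_
    rw [← nhdsWithin_Ioo_eq_nhdsGT (zero_lt_one (α := ℝ))]
    exact nhdsWithin_mono _ Ioo_subset_Icc_self
  have hγ0 : γ₁ - 1 ≠ 0 := by linarith
  have hlam2 : 2 * lam₁ * ((γ₁ - 1) / 2) = 1 - (γ₁ - 1) / 2 := by
    rw [hlam₁]; field_simp; ring
  have hlampos : 0 < lam₁ := by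
    rw [hlam₁]; exact div_pos (by linarith) (by linarith)
  have hM : Mlam ≠ 0 := by
    rw [hMlam]
    have : 0 < ∫ z in (-1:ℝ)..1, (1 - z ^ 2) ^ lam₁ := by
      apply intervalIntegral.intervalIntegral_pos_of_pos_on
      · apply Continuous.intervalIntegrable
        exact (by fun_prop : Continuous fun z : ℝ => 1 - z ^ 2).rpow_const fun _ => Or.inr hlampos.le
      · intro x hx
        exact Real.rpow_pos_of_pos (by nlinarith [hx.1, hx.2]) _
      · norm_num
    positivity
  intro ρ hρ
  have hcore := aux_core p u v k ((γ₁ - 1) / 2) lam₁ Mlam hθ hlam2 hp hkpos hpd hud hvc hkd hp0 hk0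
    (by rw [h2θ]; exact hu) (by rw [h2θ]; exact hv) a₁ b₁ ha₁ hb₁ ρ hρ
  have hdk : ∀ s, 0 < s → deriv k s = p s / s := fun s hs => (hkd s hs).deriv
  have hdr : deriv (fun r => r * deriv k r) ρ = p ρ * u ρ / ρ := by
    have he : (fun r => r * deriv k r) =ᶠ[nhds ρ] p := by
      filter_upwards [Ioi_mem_nhds hρ] with t ht
      have ht0 : t ≠ 0 := ne_of_gt ht
      rw [hdk t ht]; field_simp
    rw [he.deriv_eq, (hpd ρ hρ).deriv]
  have hpp := hp ρ hρ
  have hkp := hkpos ρ hρ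
  have hdkp : 0 < deriv k ρ := by rw [hdk ρ hρ]; positivity
  have c3 : deriv k ρ + deriv (fun r => r * deriv k r) ρ
        = (2 * deriv P ρ + ρ * deriv (deriv P) ρ) / (2 * ρ * Real.sqrt (deriv P ρ)) := by
    rw [hdr, hdk ρ hρ]
    change _ = _ / (2 * ρ * p ρ)
    have h2 : p ρ ^ 2 = deriv P ρ := Real.sq_sqrt (hpos ρ hρ).le
    simp only [hu_def]
    rw [← h2]
    field_simp
  have c4 : 0 < deriv k ρ + deriv (fun r => r * deriv k r) ρ := by
    rw [c3]
    exact div_pos (hH1 ρ hρ).2 (mul_pos (by linarith) hpp)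
  have c1 : D ρ = Mlam ^ 2 / (2 * (lam₁ + 1)) * k ρ ^ (-(2 * lam₁)) * deriv k ρ ^ (-(2:ℝ)) *
        (deriv k ρ + deriv (fun r => r * deriv k r) ρ) := by
    rw [hD, hb₂, ha₂, ha₁, hb₁]
    generalize (∫ s in (0:ℝ)..ρ, k s ^ lam₁ * deriv k s ^ (-(1:ℝ)/2) * deriv (deriv a₁) s) = I1
    generalize (∫ s in (0:ℝ)..ρ, k s ^ (lam₁ + 1) * deriv k s ^ (-(1:ℝ)/2) * deriv (deriv b₁) s) = I2 at hcore ⊢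
    generalize (∫ s in (0:ℝ)..ρ, s * k s ^ lam₁ * deriv k s ^ ((1:ℝ)/2) * deriv (deriv a₁) s) = I3 at hcore ⊢
    have hI2 : I2 = I3 + Mlam * (u ρ - (2 * lam₁ + 2) * (p ρ / k ρ) + 1) := by linarith
    have hsq : (deriv k ρ ^ ((1:ℝ)/2)) ^ 2 = deriv k ρ := by
      rw [← Real.sqrt_eq_rpow, Real.sq_sqrt hdkp.le]
    have hpk : p ρ = ρ * (deriv k ρ ^ ((1:ℝ)/2)) ^ 2 := by
      rw [hsq, hdk ρ hρ]; field_simp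
    have hw : 0 < deriv k ρ ^ ((1:ℝ)/2) := Real.rpow_pos_of_pos hdkp _
    have hL : 0 < k ρ ^ lam₁ := Real.rpow_pos_of_pos hkp _
    have r1 : k ρ ^ (-lam₁) = (k ρ ^ lam₁)⁻¹ := Real.rpow_neg hkp.le _
    have r2 : k ρ ^ (-lam₁ - 1) = (k ρ ^ lam₁)⁻¹ / k ρ := by rw [Real.rpow_sub_one hkp.ne', r1]
    have r3 : k ρ ^ (-(lam₁ + 2)) = (k ρ ^ lam₁)⁻¹ / k ρ ^ 2 := by
      rw [show -(lam₁ + 2) = -lam₁ - (2:ℕ) by push_cast; ring, Real.rpow_sub_natCast hkp.ne', r1]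
    have r4 : k ρ ^ (-(2 * lam₁)) = ((k ρ ^ lam₁) ^ 2)⁻¹ := by
      rw [Real.rpow_neg hkp.le, mul_comm, Real.rpow_mul hkp.le]; norm_num
    have r5 : deriv k ρ ^ (-(1:ℝ)/2) = (deriv k ρ ^ ((1:ℝ)/2))⁻¹ := by
      rw [neg_div, Real.rpow_neg hdkp.le]
    have r6 : deriv k ρ ^ (-(2:ℝ)) = ((deriv k ρ ^ ((1:ℝ)/2)) ^ 4)⁻¹ := by
      rw [Real.rpow_neg hdkp.le, show (deriv k ρ ^ ((1:ℝ)/2)) ^ 4 = ((deriv k ρ ^ ((1:ℝ)/2)) ^ 2) ^ 2 by ring, hsq]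
      norm_num
    rw [hdr, r1, r2, r3, r4, r5, r6, hI2, hpk]
    have hl1 : lam₁ + 1 ≠ 0 := by linarith
    have e : ∀ w : ℝ, (w ^ 2 = deriv k ρ) → 0 < w → 
        Mlam * (k ρ ^ lam₁)⁻¹ * w⁻¹ * (Mlam * ρ * ((k ρ ^ lam₁)⁻¹ / k ρ) * w) -
        2 * k ρ ^ 2 * (Mlam * (k ρ ^ lam₁)⁻¹ * w⁻¹ *
          (-(4 * (lam₁ + 1))⁻¹ * ρ * w * ((k ρ ^ lam₁)⁻¹ / k ρ ^ 2) * I1 -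
            (4 * (lam₁ + 1))⁻¹ * ((k ρ ^ lam₁)⁻¹ / k ρ ^ 2) * w⁻¹ *
              (I3 + Mlam * (u ρ - (2 * lam₁ + 2) * (ρ * w ^ 2 / k ρ) + 1)) +
            (4 * (lam₁ + 1))⁻¹ * ((k ρ ^ lam₁)⁻¹ / k ρ ^ 2) * w⁻¹ * I3) -
          -(4 * (lam₁ + 1))⁻¹ * ((k ρ ^ lam₁)⁻¹ / k ρ) * w⁻¹ * I1 *
            (Mlam * ρ * ((k ρ ^ lam₁)⁻¹ / k ρ) * w))
        = Mlam ^ 2 / (2 * (lam₁ + 1)) * ((k ρ ^ lam₁) ^ 2)⁻¹ * (w ^ 4)⁻¹ *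
          (deriv k ρ + ρ * w ^ 2 * u ρ / ρ) := by
      intro w hw1 hw2
      rw [← hw1]
      field_simp
      ring
    exact e _ hsq hw
  refine ⟨c1, ?_, c3, c4⟩
  rw [c1]
  have := Real.rpow_pos_of_pos hkp (-(2 * lam₁))
  have := Real.rpow_pos_of_pos hdkp (-(2:ℝ))
  have : 0 < Mlam ^ 2 := by positivity
  positivity
end
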